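/- arXiv:1812.09582 — 2 statements merged into one kernel-verified Lean document; each statement's English description precedes it below -/
import Mathlib

section
/- Consider the nonlinear real-time MPC closed loop with Lipschitz-cone learning. Assume there is a γ : ℝ^{Nm}×ℝⁿ → ℝ≥0 such that J_N(Ψ_o(U,x),x) − J_N(U,x) ≤ −γ(U,x) for all (U,x), and that for every U the map x ↦ J_N(U,x) is Lipschitz with constant L(U). Then along every closed-loop trajectory and for every k ≥ 1 with ξ_k ∈ ℝⁿ the following chain of inequalities holds: J_N^a(ξ_k, D(k+1)) ≤ J_N(U(k+1), ξ_k) ≤ J_N(W(k), ξ_k) − γ(W(k), ξ_k) ≤ J_N(Ψ_sw(ξ_k, D(k)), ξ_k) − γ(W(k), ξ_k) ≤ J_N^a(ξ_k, D(k)) − γ(W(k), ξ_k). In particular J_N^a(ξ_k, D(k+1)) ≤ J_N^a(ξ_k, D(k)) − γ(W(k), ξ_k). -/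
open Filter Topology

/-!
Every stored cost is exact at its own state, so the Lipschitz cone above a data point majorizes the
cost of its control sequence at every other state; the approximate cost `J_N^a`, the lowest such
cone, therefore dominates the true cost of the spatial warm start. Selecting the better warm start
and optimizing can only lower that cost, the first optimizer iteration by at least `γ`. The
optimized control sequence is stored as a data point at `ξ_k`, where its own cone carries no
distance penalty, so the new approximate cost at `ξ_k` is at most the optimized cost.
-/

section Iteration

variable {α β : Type*}

theorem antitone_apply_iterate [Preorder β] {φ : α → β} {g : α → α}
    (hg : ∀ a, φ (g a) ≤ φ a) (a : α) : Antitone fun i => φ (g^[i] a) :=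
  antitone_nat_of_succ_le fun i => by
    simpa only [Function.iterate_succ_apply'] using hg (g^[i] a)

theorem apply_iterate_le_sub [AddCommGroup β] [Preorder β] [IsOrderedAddMonoid β]
    {φ δ : α → β} {g : α → α} (hδ : ∀ a, 0 ≤ δ a) (hg : ∀ a, φ (g a) ≤ φ a - δ a)
    {i : ℕ} (hi : 1 ≤ i) (a : α) : φ (g^[i] a) ≤ φ a - δ a :=
  calc
    φ (g^[i] a) ≤ φ (g^[1] a) :=
      antitone_apply_iterate (fun b => (hg b).trans (sub_le_self _ (hδ b))) a hi
    _ ≤ φ a - δ a := hg a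

theorem apply_le_of_select_lt [Preorder β] {φ : α → β} {a b c : α}
    (ha : φ a < φ b → c = a) (hb : ¬ φ a < φ b → c = b) : φ c ≤ φ b := by
  by_cases h : φ a < φ b
  · exact ha h ▸ h.le
  · exact (congrArg φ (hb h)).le

end Iteration

section LipschitzCone

open scoped NNReal

variable {𝒰 𝒳 : Type*} {J : 𝒰 → 𝒳 → ℝ}

/-- A data set of triples `(u, x, c)` is exact for the cost `J` if each recorded value `c` is the
true cost of the control sequence `u` from the state `x`. -/
def IsExactData (J : 𝒰 → 𝒳 → ℝ) (D : Set (𝒰 × 𝒳 × ℝ)) : Prop :=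
  ∀ p ∈ D, p.2.2 = J p.1 p.2.1

theorem IsExactData.insert {D : Set (𝒰 × 𝒳 × ℝ)} (hD : IsExactData J D) (u : 𝒰) (x : 𝒳) :
    IsExactData J (insert (u, x, J u x) D) :=
  Set.forall_mem_insert.2 ⟨rfl, hD⟩

theorem isExactData_of_succ_eq_insert {D : ℕ → Set (𝒰 × 𝒳 × ℝ)} {u : ℕ → 𝒰} {x : ℕ → 𝒳}
    {k₀ : ℕ} (h₀ : IsExactData J (D k₀))
    (hD : ∀ k, k₀ ≤ k → D (k + 1) = insert (u k, x k, J (u k) (x k)) (D k))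
    {k : ℕ} (hk : k₀ ≤ k) : IsExactData J (D k) := by
  induction k, hk using Nat.le_induction with
  | base => exact h₀
  | succ k hk ih => exact hD k hk ▸ ih.insert (u k) (x k)

variable [PseudoMetricSpace 𝒳]

/-- The value at `y` of the Lipschitz cone of slope `L u` above a data point `(u, x, c)`.
The approximate cost `J_N^a` of the paper is its minimum over the data set. -/
def coneValue (L : 𝒰 → ℝ≥0) (y : 𝒳) (p : 𝒰 × 𝒳 × ℝ) : ℝ :=
  p.2.2 + L p.1 * dist p.2.1 y

theorem coneValue_apex (L : 𝒰 → ℝ≥0) (u : 𝒰) (x : 𝒳) (c : ℝ) : coneValue L x (u, x, c) = c := by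
  simp only [coneValue, dist_self, mul_zero, add_zero]

variable {L : 𝒰 → ℝ≥0}

theorem IsExactData.le_coneValue {D : Set (𝒰 × 𝒳 × ℝ)} (hD : IsExactData J D)
    (hJ : ∀ u, LipschitzWith (L u) (J u)) {p : 𝒰 × 𝒳 × ℝ} (hp : p ∈ D) (y : 𝒳) :
    J p.1 y ≤ coneValue L y p := by
  rw [coneValue, hD p hp, dist_comm]
  exact (hJ p.1).le_add_mul y p.2.1

theorem le_of_isLeast_coneValue_image_insert {D : Set (𝒰 × 𝒳 × ℝ)} {u : 𝒰} {x : 𝒳} {a c : ℝ}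
    (ha : IsLeast (coneValue L x '' insert (u, x, c) D) a) : a ≤ c :=
  ha.2 ⟨_, Set.mem_insert _ _, coneValue_apex L u x c⟩

theorem stmt_9_general {Ψo : 𝒰 → 𝒳 → 𝒰} {γ : 𝒰 → 𝒳 → ℝ}
    (hJ : ∀ u, LipschitzWith (L u) (J u)) (hγ : ∀ u x, 0 ≤ γ u x)
    (ho : ∀ u x, J (Ψo u x) x - J u x ≤ -γ u x)
    {D : ℕ → Set (𝒰 × 𝒳 × ℝ)} {Ja : 𝒳 → ℕ → ℝ} {Ψsw : 𝒳 → ℕ → 𝒰}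
    (hJa : ∀ k, 1 ≤ k → ∀ y, IsLeast (coneValue L y '' D k) (Ja y k))
    (hΨ : ∀ k, 1 ≤ k → ∀ y, ∃ x c, (Ψsw y k, x, c) ∈ D k ∧
      Ja y k = coneValue L y (Ψsw y k, x, c))
    {U W : ℕ → 𝒰} {ξ : ℕ → 𝒳} {iT : ℕ → ℕ} (hiT : ∀ k, 1 ≤ k → 1 ≤ iT k)
    (hW : ∀ k, 1 ≤ k → J (W k) (ξ k) ≤ J (Ψsw (ξ k) k) (ξ k))
    (hU : ∀ k, 1 ≤ k → U (k + 1) = (fun u => Ψo u (ξ k))^[iT k] (W k))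
    (hD : ∀ k, 1 ≤ k → D (k + 1) = insert (U (k + 1), ξ k, J (U (k + 1)) (ξ k)) (D k))
    (hD1 : IsExactData J (D 1)) (k : ℕ) (hk : 1 ≤ k) :
    Ja (ξ k) (k + 1) ≤ J (U (k + 1)) (ξ k) ∧
    J (U (k + 1)) (ξ k) ≤ J (W k) (ξ k) - γ (W k) (ξ k) ∧
    J (W k) (ξ k) - γ (W k) (ξ k) ≤ J (Ψsw (ξ k) k) (ξ k) - γ (W k) (ξ k) ∧
    J (Ψsw (ξ k) k) (ξ k) - γ (W k) (ξ k) ≤ Ja (ξ k) k - γ (W k) (ξ k) ∧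
    Ja (ξ k) (k + 1) ≤ Ja (ξ k) k - γ (W k) (ξ k) := by
  have learn : Ja (ξ k) (k + 1) ≤ J (U (k + 1)) (ξ k) :=
    le_of_isLeast_coneValue_image_insert (hD k hk ▸ hJa (k + 1) (Nat.le_add_left 1 k) (ξ k))
  have optimize : J (U (k + 1)) (ξ k) ≤ J (W k) (ξ k) - γ (W k) (ξ k) := by
    rw [hU k hk]
    exact apply_iterate_le_sub (φ := (J · (ξ k))) (δ := (γ · (ξ k))) (fun u => hγ u (ξ k))
      (fun u => by linarith [ho u (ξ k)]) (hiT k hk) (W k)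
  have select := sub_le_sub_right (hW k hk) (γ (W k) (ξ k))
  have warmStart : J (Ψsw (ξ k) k) (ξ k) ≤ Ja (ξ k) k := by
    obtain ⟨x, c, hmem, hmin⟩ := hΨ k hk (ξ k)
    exact hmin ▸ (isExactData_of_succ_eq_insert hD1 hD hk).le_coneValue hJ hmem (ξ k)
  have approximate := sub_le_sub_right warmStart (γ (W k) (ξ k))
  exact ⟨learn, optimize, select, approximate,
    learn.trans (optimize.trans (select.trans approximate))⟩

end LipschitzCone

/-- The descent chain for the nonlinear real-time MPC closed loop
with Lipschitz-cone learning: for every `k ≥ 1`,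
`J_N^a(ξ_k, D(k+1)) ≤ J_N(U(k+1), ξ_k) ≤ J_N(W k, ξ_k) − γ(W k, ξ_k)
  ≤ J_N(Ψsw(ξ_k, D k), ξ_k) − γ(W k, ξ_k) ≤ J_N^a(ξ_k, D k) − γ(W k, ξ_k)`,
and in particular `J_N^a(ξ_k, D(k+1)) ≤ J_N^a(ξ_k, D k) − γ(W k, ξ_k)`. -/
theorem stmt_9 (n m N : ℕ) (hn : 0 < n) (hm : 0 < m) (hN : 0 < N)
    (f : EuclideanSpace ℝ (Fin n) → EuclideanSpace ℝ (Fin m) → EuclideanSpace ℝ (Fin n))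
    (J : EuclideanSpace ℝ (Fin (N * m)) → EuclideanSpace ℝ (Fin n) → ℝ)
    (L : EuclideanSpace ℝ (Fin (N * m)) → ℝ)
    (Ψtw Ψo : EuclideanSpace ℝ (Fin (N * m)) → EuclideanSpace ℝ (Fin n) →
      EuclideanSpace ℝ (Fin (N * m)))
    (γ : EuclideanSpace ℝ (Fin (N * m)) → EuclideanSpace ℝ (Fin n) → ℝ)
    (proj0 : EuclideanSpace ℝ (Fin (N * m)) → EuclideanSpace ℝ (Fin m))
    (hproj0 : ∀ U i, proj0 U i = U (Fin.castLE (Nat.le_mul_of_pos_left m hN) i))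
    -- Lipschitz continuity of the cost in the state
    (hL0 : ∀ U, 0 ≤ L U)
    (hLip : ∀ U x y, |J U x - J U y| ≤ L U * ‖x - y‖)
    -- decrease of the optimization update operator
    (hγ_nonneg : ∀ U x, 0 ≤ γ U x)
    (ho : ∀ U x, J (Ψo U x) x - J U x ≤ -γ U x)
    -- data sets and Lipschitz-cone spatial warm start
    (D : ℕ → Set (EuclideanSpace ℝ (Fin (N * m)) × EuclideanSpace ℝ (Fin n) × ℝ))
    (Ja : EuclideanSpace ℝ (Fin n) → ℕ → ℝ)
    (Ψsw : EuclideanSpace ℝ (Fin n) → ℕ → EuclideanSpace ℝ (Fin (N * m)))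
    (hJa : ∀ k, 1 ≤ k → ∀ xbar, IsLeast
      {v : ℝ | ∃ p ∈ D k, v = p.2.2 + L p.1 * ‖p.2.1 - xbar‖} (Ja xbar k))
    (hΨ : ∀ k, 1 ≤ k → ∀ xbar, ∃ x Jv, (Ψsw xbar k, x, Jv) ∈ D k ∧
      Ja xbar k = Jv + L (Ψsw xbar k) * ‖x - xbar‖)
    -- closed loop with min-selection of warm starts
    (U W : ℕ → EuclideanSpace ℝ (Fin (N * m)))
    (X ξ : ℕ → EuclideanSpace ℝ (Fin n))
    (w : ℕ → EuclideanSpace ℝ (Fin n))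
    (iT : ℕ → ℕ) (hiT : ∀ k, 1 ≤ iT k)
    (hξ : ∀ k, ξ k = f (X k) (proj0 (U k)))
    (hW_t : ∀ k, 1 ≤ k → J (Ψtw (U k) (X k)) (ξ k) < J (Ψsw (ξ k) k) (ξ k) →
      W k = Ψtw (U k) (X k))
    (hW_s : ∀ k, 1 ≤ k → ¬ J (Ψtw (U k) (X k)) (ξ k) < J (Ψsw (ξ k) k) (ξ k) →
      W k = Ψsw (ξ k) k)
    (hU : ∀ k, 1 ≤ k → U (k + 1) = (fun V => Ψo V (ξ k))^[iT k] (W k))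
    (hX : ∀ k, 1 ≤ k → X (k + 1) = ξ k + w k)
    (hD : ∀ k, 1 ≤ k → D (k + 1) = D k ∪ {(U (k + 1), ξ k, J (U (k + 1)) (ξ k))})
    (hD1fin : (D 1).Finite) (hD1ne : (D 1).Nonempty)
    (hD1 : ∀ p ∈ D 1, p.2.2 = J p.1 p.2.1) :
    ∀ k, 1 ≤ k →
      Ja (ξ k) (k + 1) ≤ J (U (k + 1)) (ξ k) ∧
      J (U (k + 1)) (ξ k) ≤ J (W k) (ξ k) - γ (W k) (ξ k) ∧
      J (W k) (ξ k) - γ (W k) (ξ k) ≤ J (Ψsw (ξ k) k) (ξ k) - γ (W k) (ξ k) ∧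
      J (Ψsw (ξ k) k) (ξ k) - γ (W k) (ξ k) ≤ Ja (ξ k) k - γ (W k) (ξ k) ∧
      Ja (ξ k) (k + 1) ≤ Ja (ξ k) k - γ (W k) (ξ k) := by
  lift L to EuclideanSpace ℝ (Fin (N * m)) → NNReal using hL0
  refine stmt_9_general (L := L) (fun u => lipschitzWith_iff_norm_sub_le.2 (hLip u)) hγ_nonneg ho
    (fun k hk y => ?_) (by simpa only [coneValue, dist_eq_norm] using hΨ) (fun k _ => hiT k)
    (fun k hk => apply_le_of_select_lt (φ := (J · (ξ k))) (hW_t k hk) (hW_s k hk)) hU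
    (by simpa only [Set.union_singleton] using hD) hD1
  simpa only [Set.image, coneValue, dist_eq_norm, eq_comm] using hJa k hk y
end

section
/- Consider the nonlinear real-time MPC closed loop with Lipschitz-cone learning. Assume: (a) for every U ∈ ℝ^{Nm}, x ↦ J_N(U,x) is Lipschitz continuous with constant L(U), and L(U(k)) ≤ M for all k ≥ 1 and some M ∈ ℝ; (b) the value function J_N^*(x) = inf_U J_N(U,x) is finite and Lipschitz continuous with constant M; (c) there is a continuous γ : ℝ^{Nm}×ℝⁿ → ℝ≥0 with γ(U,x) = 0 if and only if J_N(U,x) = J_N^*(x), such that J_N(Ψ_o(U,x),x) − J_N(U,x) ≤ −γ(U,x) for all (U,x); (d) the sequences (W(k), ξ_k) remain in a fixed compact set and J_N is continuous. Then for every ω-limit point x of the sequence (ξ_k), one has lim_{k→∞} J_N(Ψ_sw(x, D(k)), x) = J_N^*(x); i.e. the spatial warm start asymptotically attains the value function at every recurrent point. -/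
open Filter Topology

/-!
The learned upper bound `a k` at an ω-limit point `x` is the smallest cone value
`v + L u * dist z x` over the data. It decreases as data are added, so it converges. Each visit
of `ξ k` near `x` adds a cone that lowers the bound by the decrease `γ` of the optimizer, up to
an error proportional to `dist (ξ k) x`; since the bound converges, `γ → 0` along these visits.
By compactness the warm starts accumulate at an input `u` with `γ u x = 0`, that is, an optimal
one, and `J u x` is both the optimal value and the limit of `a`. The cost of the spatial warm
start lies between the optimal value and `a k`.
-/

open scoped NNReal

section Descent

theorem apply_le_of_min_selection {α β : Type*} [Preorder β] (c : α → β) {w t s : α}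
    (ht : c t < c s → w = t) (hs : ¬c t < c s → w = s) : c w ≤ c s := by
  by_cases h : c t < c s
  · exact ht h ▸ h.le
  · exact hs h ▸ le_rfl

theorem apply_iterate_le_sub_s10 {α : Type*} {c g : α → ℝ} {T : α → α} (hg : ∀ u, 0 ≤ g u)
    (hT : ∀ u, c (T u) - c u ≤ -g u) {i : ℕ} (hi : 1 ≤ i) (u : α) :
    c (T^[i] u) ≤ c u - g u := by
  have anti : Antitone fun j => c (T^[j] u) := antitone_nat_of_succ_le fun j => by
    rw [Function.iterate_succ_apply']
    linarith [hT (T^[j] u), hg (T^[j] u)]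
  calc c (T^[i] u) ≤ c (T u) := anti hi
    _ ≤ c u - g u := by linarith [hT u]

theorem tendsto_of_le_add_of_succ_le_sub_add {a c g e : ℕ → ℝ} {A : ℝ} {F : Filter ℕ}
    (hF : F ≤ atTop) (ha : Tendsto a atTop (𝓝 A)) (he : Tendsto e F (𝓝 0)) (hg : ∀ k, 0 ≤ g k)
    (hc : ∀ k, c k ≤ a k + e k) (hstep : ∀ k, a (k + 1) ≤ c k - g k + e k) :
    Tendsto c F (𝓝 A) ∧ Tendsto g F (𝓝 0) := by
  have ha₀ : Tendsto a F (𝓝 A) := ha.mono_left hF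
  have ha₁ : Tendsto (fun k => a (k + 1)) F (𝓝 A) :=
    ((tendsto_add_atTop_iff_nat 1).2 ha).mono_left hF
  have lower : Tendsto (fun k => a (k + 1) - e k) F (𝓝 A) := by simpa using ha₁.sub he
  have upper : Tendsto (fun k => a k + e k) F (𝓝 A) := by simpa using ha₀.add he
  have gap : Tendsto (fun k => (a k + e k) - (a (k + 1) - e k)) F (𝓝 0) := by
    simpa using upper.sub lower
  exact ⟨tendsto_of_tendsto_of_tendsto_of_le_of_le lower upper
      (fun k => by linarith [hstep k, hg k]) hc,
    squeeze_zero hg (fun k => by linarith [hstep k, hc k]) gap⟩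

theorem exists_ultrafilter_tendsto_of_mapClusterPt {ι α β : Type*} [TopologicalSpace α]
    [TopologicalSpace β] {l : Filter ι} {ξ : ι → β} {x : β} (hx : MapClusterPt x l ξ)
    {W : ι → α} {K : Set α} (hK : IsCompact K) (hW : ∀ i, W i ∈ K) :
    ∃ (F : Ultrafilter ι) (u : α), ↑F ≤ l ∧ Tendsto ξ F (𝓝 x) ∧ Tendsto W F (𝓝 u) := by
  obtain ⟨F, hF, hξ⟩ := mapClusterPt_iff_ultrafilter.1 hx
  obtain ⟨u, -, hu⟩ := hK.ultrafilter_le_nhds (F.map W)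
    (tendsto_principal.2 (Eventually.of_forall hW))
  exact ⟨F, u, hF, hξ, hu⟩

theorem tendsto_of_descent_of_mapClusterPt {𝒰 E : Type*} [TopologicalSpace 𝒰]
    [PseudoMetricSpace E] {J γ : 𝒰 → E → ℝ} (hJ : Continuous (Function.uncurry J))
    (hγ : Continuous (Function.uncurry γ)) (hγ_nonneg : ∀ u y, 0 ≤ γ u y) {x : E} {v : ℝ}
    (hγ_zero : ∀ u, γ u x = 0 → J u x = v) {W : ℕ → 𝒰} {K : Set 𝒰} (hK : IsCompact K)
    (hW : ∀ k, W k ∈ K) {ξ : ℕ → E} (hx : MapClusterPt x atTop ξ) {a : ℕ → ℝ} {C : ℝ}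
    (ha : Antitone a) (ha_bdd : BddBelow (Set.range a))
    (hle : ∀ k, J (W k) (ξ k) ≤ a k + C * dist (ξ k) x)
    (hstep : ∀ k, a (k + 1) ≤ J (W k) (ξ k) - γ (W k) (ξ k) + C * dist (ξ k) x) :
    Tendsto a atTop (𝓝 v) := by
  obtain ⟨F, u, hF, hξ, hu⟩ := exists_ultrafilter_tendsto_of_mapClusterPt hx hK hW
  have ha_lim : Tendsto a atTop (𝓝 (⨅ k, a k)) := tendsto_atTop_ciInf ha ha_bdd
  have error : Tendsto (fun k => C * dist (ξ k) x) F (𝓝 0) := by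
    simpa using (tendsto_iff_dist_tendsto_zero.1 hξ).const_mul C
  obtain ⟨hJ_inf, hγ_lim⟩ := tendsto_of_le_add_of_succ_le_sub_add hF ha_lim error
    (fun k => hγ_nonneg (W k) (ξ k)) hle hstep
  have hWξ : Tendsto (fun k => (W k, ξ k)) F (𝓝 (u, x)) := hu.prodMk_nhds hξ
  have optimal : J u x = v :=
    hγ_zero u (tendsto_nhds_unique ((hγ.tendsto (u, x)).comp hWξ) hγ_lim)
  have value : J u x = ⨅ k, a k := tendsto_nhds_unique ((hJ.tendsto (u, x)).comp hWξ) hJ_inf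
  rwa [← value, optimal] at ha_lim

end Descent

section LipschitzCone

variable {𝒰 E : Type*} [PseudoMetricSpace E] {J : 𝒰 → E → ℝ} {L : 𝒰 → ℝ≥0}
  {D : Set (𝒰 × E × ℝ)} {x y : E} {p q : 𝒰 × E × ℝ}

/-- The value at `y` of the Lipschitz cone of the data triple `p = (U, z, J U z)`, an upper bound
for the cost of the stored input `U` at the state `y`. -/
def coneBound (L : 𝒰 → ℝ≥0) (y : E) (p : 𝒰 × E × ℝ) : ℝ :=
  p.2.2 + L p.1 * dist p.2.1 y

/-- The input `u` is a spatial warm start `Ψ_sw(y, D)`: the input of a data triple minimizing the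
cone value at `y`. Minimizers need not be unique, hence a predicate. -/
def IsSpatialWarmStart (L : 𝒰 → ℝ≥0) (D : Set (𝒰 × E × ℝ)) (y : E) (u : 𝒰) : Prop :=
  ∃ p ∈ D, p.1 = u ∧ IsMinOn (coneBound L y) D p

theorem isSpatialWarmStart_of_mem_lowerBounds {u : 𝒰} {b : ℝ}
    (hb : b ∈ lowerBounds {v | ∃ p ∈ D, v = coneBound L y p})
    (hu : ∃ z v, (u, z, v) ∈ D ∧ b = coneBound L y (u, z, v)) : IsSpatialWarmStart L D y u := by
  obtain ⟨z, v, hmem, rfl⟩ := hu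
  exact ⟨(u, z, v), hmem, rfl, fun q hq => hb ⟨q, hq, rfl⟩⟩

theorem cost_le_coneBound (hJ : LipschitzWith (L p.1) (J p.1)) (hp : p.2.2 = J p.1 p.2.1) (y : E) :
    J p.1 y ≤ coneBound L y p := by
  rw [coneBound, hp, dist_comm]
  exact hJ.le_add_mul y p.2.1

theorem coneBound_le_coneBound_add (L : 𝒰 → ℝ≥0) (x y : E) (p : 𝒰 × E × ℝ) :
    coneBound L y p ≤ coneBound L x p + L p.1 * dist x y := by
  rw [coneBound, coneBound, add_assoc, ← mul_add]
  gcongr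
  exact dist_triangle p.2.1 x y

theorem coneBound_le_add_of_isMinOn {C : ℝ} (hq : IsMinOn (coneBound L y) D q) (hp : p ∈ D)
    (hC : L p.1 ≤ C) (x : E) : coneBound L y q ≤ coneBound L x p + C * dist y x := by
  calc coneBound L y q ≤ coneBound L y p := hq hp
    _ ≤ coneBound L x p + L p.1 * dist x y := coneBound_le_coneBound_add L x y p
    _ ≤ coneBound L x p + C * dist y x := by rw [dist_comm]; gcongr

theorem tendsto_coneBound_of_isMinOn [TopologicalSpace 𝒰] {γ : 𝒰 → E → ℝ}
    (hLip : ∀ u, LipschitzWith (L u) (J u))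
    (hJ : Continuous (Function.uncurry J)) (hγ : Continuous (Function.uncurry γ))
    (hγ_nonneg : ∀ u y, 0 ≤ γ u y) {b : ℝ} (hb : ∀ u, b ≤ J u x)
    (hγ_zero : ∀ u, γ u x = 0 → J u x = b)
    {D : ℕ → Set (𝒰 × E × ℝ)} (hD : Monotone D) (hD_cost : ∀ k, ∀ q ∈ D k, q.2.2 = J q.1 q.2.1)
    {C : ℝ} (hD_lip : ∀ k, ∀ q ∈ D k, L q.1 ≤ C)
    {p : E → ℕ → 𝒰 × E × ℝ} (hp_mem : ∀ y k, p y k ∈ D k)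
    (hp_min : ∀ y k, IsMinOn (coneBound L y) (D k) (p y k))
    {U W : ℕ → 𝒰} {ξ : ℕ → E} (hW : ∀ k, J (W k) (ξ k) ≤ J (p (ξ k) k).1 (ξ k))
    (hU : ∀ k, J (U k) (ξ k) ≤ J (W k) (ξ k) - γ (W k) (ξ k))
    (hU_mem : ∀ k, (U k, ξ k, J (U k) (ξ k)) ∈ D (k + 1))
    {K : Set 𝒰} (hK : IsCompact K) (hWK : ∀ k, W k ∈ K) (hx : MapClusterPt x atTop ξ) :
    Tendsto (fun k => coneBound L x (p x k)) atTop (𝓝 b) := by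
  have cost_le : ∀ y k, J (p y k).1 y ≤ coneBound L y (p y k) := fun y k =>
    cost_le_coneBound (hLip _) (hD_cost k _ (hp_mem y k)) y
  have anti : Antitone fun k => coneBound L x (p x k) := antitone_nat_of_succ_le fun k =>
    hp_min x (k + 1) (hD k.le_succ (hp_mem x k))
  refine tendsto_of_descent_of_mapClusterPt hJ hγ hγ_nonneg hγ_zero hK hWK hx
    (C := C) anti ?bddBelow (fun k => ?warmStart) (fun k => ?newData)
  case bddBelow =>
    exact ⟨b, Set.forall_mem_range.2 fun k => (hb _).trans (cost_le x k)⟩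
  case warmStart =>
    calc J (W k) (ξ k) ≤ J (p (ξ k) k).1 (ξ k) := hW k
      _ ≤ coneBound L (ξ k) (p (ξ k) k) := cost_le (ξ k) k
      _ ≤ coneBound L x (p x k) + C * dist (ξ k) x :=
          coneBound_le_add_of_isMinOn (hp_min (ξ k) k) (hp_mem x k) (hD_lip k _ (hp_mem x k)) x
  case newData =>
    calc coneBound L x (p x (k + 1)) ≤ J (U k) (ξ k) + L (U k) * dist (ξ k) x :=
          hp_min x (k + 1) (hU_mem k)
      _ ≤ J (W k) (ξ k) - γ (W k) (ξ k) + C * dist (ξ k) x := by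
          gcongr
          exacts [hU k, hD_lip (k + 1) _ (hU_mem k)]

end LipschitzCone

theorem forall_mem_of_succ_eq_insert {α : Type*} {P : α → Prop} {D : ℕ → Set α} {d : ℕ → α}
    (hD : ∀ k, D (k + 1) = insert (d k) (D k)) (h₀ : ∀ p ∈ D 0, P p) (hd : ∀ k, P (d k)) (k : ℕ) :
    ∀ p ∈ D k, P p := by
  induction k with
  | zero => exact h₀
  | succ k ih =>
    rw [hD k]
    exact Set.forall_mem_insert.2 ⟨hd k, ih⟩

theorem stmt_10_general {𝒰 E : Type*} [TopologicalSpace 𝒰] [PseudoMetricSpace E]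
    {J γ : 𝒰 → E → ℝ} {Jstar : E → ℝ} {L : 𝒰 → ℝ≥0} {M : ℝ}
    (hLip : ∀ u, LipschitzWith (L u) (J u))
    (hJstar : ∀ y, IsGLB (Set.range fun u => J u y) (Jstar y))
    (hJ : Continuous (Function.uncurry J)) (hγ : Continuous (Function.uncurry γ))
    (hγ_nonneg : ∀ u y, 0 ≤ γ u y) (hγ_zero : ∀ u y, γ u y = 0 → J u y = Jstar y)
    {D : ℕ → Set (𝒰 × E × ℝ)} {Ψsw : E → ℕ → 𝒰} {U W : ℕ → 𝒰} {ξ : ℕ → E}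
    (hΨ : ∀ y k, IsSpatialWarmStart L (D k) y (Ψsw y k))
    (hW : ∀ k, J (W k) (ξ k) ≤ J (Ψsw (ξ k) k) (ξ k))
    (hU : ∀ k, J (U k) (ξ k) ≤ J (W k) (ξ k) - γ (W k) (ξ k))
    (hD : ∀ k, D (k + 1) = insert (U k, ξ k, J (U k) (ξ k)) (D k))
    (hD₀ : ∀ p ∈ D 0, p.2.2 = J p.1 p.2.1) (hLD₀ : BddAbove ((fun p => (L p.1 : ℝ)) '' D 0))
    (hLU : ∀ k, L (U k) ≤ M) {K : Set 𝒰} (hK : IsCompact K) (hWK : ∀ k, W k ∈ K)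
    {x : E} (hx : MapClusterPt x atTop ξ) :
    Tendsto (fun k => J (Ψsw x k) x) atTop (𝓝 (Jstar x)) := by
  choose p hp_mem hp_fst hp_min using hΨ
  simp only [← hp_fst] at hW ⊢
  obtain ⟨B, hB⟩ := hLD₀
  have mono : Monotone D := monotone_nat_of_le_succ fun k => hD k ▸ Set.subset_insert _ _
  have cost : ∀ k, ∀ q ∈ D k, q.2.2 = J q.1 q.2.1 :=
    forall_mem_of_succ_eq_insert hD hD₀ fun _ => rfl
  have lip : ∀ k, ∀ q ∈ D k, L q.1 ≤ max B M :=
    forall_mem_of_succ_eq_insert hD (fun q hq => le_max_of_le_left (hB ⟨q, hq, rfl⟩))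
      fun k => le_max_of_le_right (hLU k)
  have Jstar_le : ∀ u, Jstar x ≤ J u x := fun u => (hJstar x).1 ⟨u, rfl⟩
  have learned : Tendsto (fun k => coneBound L x (p x k)) atTop (𝓝 (Jstar x)) :=
    tendsto_coneBound_of_isMinOn hLip hJ hγ hγ_nonneg Jstar_le (hγ_zero · x) mono cost lip
      hp_mem hp_min hW hU (fun k => hD k ▸ Set.mem_insert _ _) hK hWK hx
  exact tendsto_of_tendsto_of_tendsto_of_le_of_le tendsto_const_nhds learned
    (fun k => Jstar_le _) (fun k => cost_le_coneBound (hLip _) (cost k _ (hp_mem x k)) x)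

/-- Convergence of the Lipschitz-cone learning scheme
(Theorem 5 of the paper): along the nonlinear real-time MPC closed loop with
Lipschitz-cone spatial warm start and min-selection of warm starts, at every
ω-limit point `x` of the sequence `ξ k = f(x k, Π₀ U k)`, the cost of the
spatial warm start converges to the value `J_N^*(x)`. -/
theorem stmt_10 (n m N : ℕ) (hn : 0 < n) (hm : 0 < m) (hN : 0 < N)
    (f : EuclideanSpace ℝ (Fin n) → EuclideanSpace ℝ (Fin m) → EuclideanSpace ℝ (Fin n))
    (J : EuclideanSpace ℝ (Fin (N * m)) → EuclideanSpace ℝ (Fin n) → ℝ)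
    (Jstar : EuclideanSpace ℝ (Fin n) → ℝ)
    (L : EuclideanSpace ℝ (Fin (N * m)) → ℝ)
    (M : ℝ)
    (Ψtw Ψo : EuclideanSpace ℝ (Fin (N * m)) → EuclideanSpace ℝ (Fin n) →
      EuclideanSpace ℝ (Fin (N * m)))
    (γ : EuclideanSpace ℝ (Fin (N * m)) → EuclideanSpace ℝ (Fin n) → ℝ)
    (proj0 : EuclideanSpace ℝ (Fin (N * m)) → EuclideanSpace ℝ (Fin m))
    (hproj0 : ∀ U i, proj0 U i = U (Fin.castLE (Nat.le_mul_of_pos_left m hN) i))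
    -- (a) Lipschitz continuity of the cost in the state
    (hL0 : ∀ U, 0 ≤ L U)
    (hLip : ∀ U x y, |J U x - J U y| ≤ L U * ‖x - y‖)
    -- (b) value function: finite, greatest lower bound, Lipschitz with constant M
    (hJstar : ∀ x, IsGLB (Set.range fun U => J U x) (Jstar x))
    (hJstarLip : ∀ x y, |Jstar x - Jstar y| ≤ M * ‖x - y‖)
    -- (c) decrease of the optimization update operator
    (hγ_cont : Continuous fun p : EuclideanSpace ℝ (Fin (N * m)) × EuclideanSpace ℝ (Fin n) =>
      γ p.1 p.2)
    (hγ_nonneg : ∀ U x, 0 ≤ γ U x)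
    (hγ_zero : ∀ U x, γ U x = 0 ↔ J U x = Jstar x)
    (ho : ∀ U x, J (Ψo U x) x - J U x ≤ -γ U x)
    -- (d) continuity of the cost
    (hJcont : Continuous fun p : EuclideanSpace ℝ (Fin (N * m)) × EuclideanSpace ℝ (Fin n) =>
      J p.1 p.2)
    -- data sets and Lipschitz-cone spatial warm start
    (D : ℕ → Set (EuclideanSpace ℝ (Fin (N * m)) × EuclideanSpace ℝ (Fin n) × ℝ))
    (Ja : EuclideanSpace ℝ (Fin n) → ℕ → ℝ)
    (Ψsw : EuclideanSpace ℝ (Fin n) → ℕ → EuclideanSpace ℝ (Fin (N * m)))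
    (hJa : ∀ k, 1 ≤ k → ∀ xbar, IsLeast
      {v : ℝ | ∃ p ∈ D k, v = p.2.2 + L p.1 * ‖p.2.1 - xbar‖} (Ja xbar k))
    (hΨ : ∀ k, 1 ≤ k → ∀ xbar, ∃ x Jv, (Ψsw xbar k, x, Jv) ∈ D k ∧
      Ja xbar k = Jv + L (Ψsw xbar k) * ‖x - xbar‖)
    -- closed loop with min-selection of warm starts
    (U W : ℕ → EuclideanSpace ℝ (Fin (N * m)))
    (X ξ : ℕ → EuclideanSpace ℝ (Fin n))
    (w : ℕ → EuclideanSpace ℝ (Fin n))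
    (iT : ℕ → ℕ) (hiT : ∀ k, 1 ≤ iT k)
    (hξ : ∀ k, ξ k = f (X k) (proj0 (U k)))
    (hW_t : ∀ k, 1 ≤ k → J (Ψtw (U k) (X k)) (ξ k) < J (Ψsw (ξ k) k) (ξ k) →
      W k = Ψtw (U k) (X k))
    (hW_s : ∀ k, 1 ≤ k → ¬ J (Ψtw (U k) (X k)) (ξ k) < J (Ψsw (ξ k) k) (ξ k) →
      W k = Ψsw (ξ k) k)
    (hU : ∀ k, 1 ≤ k → U (k + 1) = (fun V => Ψo V (ξ k))^[iT k] (W k))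
    (hX : ∀ k, 1 ≤ k → X (k + 1) = ξ k + w k)
    (hD : ∀ k, 1 ≤ k → D (k + 1) = D k ∪ {(U (k + 1), ξ k, J (U (k + 1)) (ξ k))})
    (hD1fin : (D 1).Finite) (hD1ne : (D 1).Nonempty)
    (hD1 : ∀ p ∈ D 1, p.2.2 = J p.1 p.2.1)
    -- (a) uniform bound on the Lipschitz constants along the trajectory
    (hLM : ∀ k, 1 ≤ k → L (U k) ≤ M)
    -- (d) compactness of the closed-loop data
    (K : Set (EuclideanSpace ℝ (Fin (N * m)) × EuclideanSpace ℝ (Fin n)))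
    (hK : IsCompact K)
    (hcomp : ∀ k, 1 ≤ k → (W k, ξ k) ∈ K) :
    ∀ x : EuclideanSpace ℝ (Fin n),
      (∃ φ : ℕ → ℕ, StrictMono φ ∧ Tendsto (fun i => ξ (φ i)) atTop (𝓝 x)) →
      Tendsto (fun k => J (Ψsw x k) x) atTop (𝓝 (Jstar x)) := by
  rintro x ⟨φ, hφ, hφx⟩
  lift L to EuclideanSpace ℝ (Fin (N * m)) → ℝ≥0 using hL0
  simp only [← Real.dist_eq, ← dist_eq_norm] at hLip hJa hΨ
  -- The closed loop starts at `k = 1`, the general theorem at `k = 0`.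
  have pos (k : ℕ) : 1 ≤ k + 1 := k.succ_pos
  have cluster : MapClusterPt x atTop (ξ ∘ (· + 1)) := by
    rw [mapClusterPt_comp, map_add_atTop_eq_nat]
    exact hφx.mapClusterPt.of_comp hφ.tendsto_atTop
  have spatial (y) (k : ℕ) : IsSpatialWarmStart L (D (k + 1)) y (Ψsw y (k + 1)) :=
    isSpatialWarmStart_of_mem_lowerBounds (hJa _ (pos k) y).2 (hΨ _ (pos k) y)
  have selection (k : ℕ) :
      J (W (k + 1)) (ξ (k + 1)) ≤ J (Ψsw (ξ (k + 1)) (k + 1)) (ξ (k + 1)) :=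
    apply_le_of_min_selection (J · (ξ (k + 1))) (hW_t _ (pos k)) (hW_s _ (pos k))
  have decrease (k : ℕ) : J (U (k + 2)) (ξ (k + 1)) ≤
      J (W (k + 1)) (ξ (k + 1)) - γ (W (k + 1)) (ξ (k + 1)) :=
    hU _ (pos k) ▸ apply_iterate_le_sub_s10 (c := (J · (ξ (k + 1)))) (hγ_nonneg · _) (ho · _) (hiT _) _
  exact (tendsto_add_atTop_iff_nat 1).1 <| stmt_10_general (D := fun k => D (k + 1))
    (fun u => .of_dist_le_mul (hLip u)) hJstar hJcont hγ_cont hγ_nonneg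
    (fun u y => (hγ_zero u y).1) spatial selection decrease
    (fun k => (hD _ (pos k)).trans Set.union_singleton) hD1 (hD1fin.image _).bddAbove
    (fun k => hLM _ (pos (k + 1))) (hK.image continuous_fst) (fun k => ⟨_, hcomp _ (pos k), rfl⟩)
    cluster
end
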